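/- Let W_{q'} ⊆ W_q be a parabolic subgroup, let W^{q'}∩W_q denote the set of shortest coset representatives for W_{q'}\W_q and w^{q'}_q its longest element. The map i : M^p_q → M^p_{q'} defined by i(N_w) = Σ_{x ∈ W^{q'}∩W_q} q^{l(w^{q'}_q) - l(x)}·N_{xw} (note that xw ∈ W^{p+q'} for w ∈ W^{p+q} and x ∈ W^{q'}∩W_q) is an injective homomorphism of right H_n-modules, commutes with the bar involutions, and sends the canonical basis element N̲_w of M^p_q to the canonical basis element N̲_{w^{q'}_q w} of M^p_{q'}, for every w ∈ W^{p+q}. -/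

import Mathlib

open scoped Classical

noncomputable section

abbrev K : Type := RatFunc ℂ

noncomputable def q : K := RatFunc.X

def s (n : ℕ) (i : Fin (n - 1)) : Equiv.Perm (Fin n) :=
  Equiv.swap ⟨(i : ℕ), by have := i.isLt; omega⟩ ⟨(i : ℕ) + 1, by have := i.isLt; omega⟩

def wordProd (n : ℕ) (l : List (Fin (n - 1))) : Equiv.Perm (Fin n) :=
  (l.map (s n)).prod

def len (n : ℕ) (w : Equiv.Perm (Fin n)) : ℕ :=
  sInf {k | ∃ l : List (Fin (n - 1)), l.length = k ∧ wordProd n l = w}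

def bruhatLE (n : ℕ) (u w : Equiv.Perm (Fin n)) : Prop :=
  ∃ l : List (Fin (n - 1)), l.length = len n w ∧ wordProd n l = w ∧
    ∃ t : List (Fin (n - 1)), t.Sublist l ∧ wordProd n t = u

def bruhatLT (n : ℕ) (u w : Equiv.Perm (Fin n)) : Prop :=
  bruhatLE n u w ∧ u ≠ w

/-- The parabolic subgroup of `S_n` generated by the simple transpositions indexed by `P`. -/
def parab (n : ℕ) (P : Finset (Fin (n - 1))) : Subgroup (Equiv.Perm (Fin n)) :=
  Subgroup.closure {σ | ∃ i ∈ P, σ = s n i}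

/-- `w` is a shortest coset representative for `W_P \ S_n`. -/
def IsShort (n : ℕ) (P : Finset (Fin (n - 1))) (w : Equiv.Perm (Fin n)) : Prop :=
  ∀ x ∈ parab n P, len n w ≤ len n (x * w)

/-- `C` is the canonical basis of the mixed induced module with standard basis `N`
(indexed by the permutations satisfying `short`) and bar involution `barM`:
each `C w` is bar-invariant and `C w = N w + Σ_{w' ≺ w} R(q)·N_{w'}` with `R ∈ q·ℤ[q]`. -/
def IsCanonBasis (n : ℕ) {M : Type} [AddCommGroup M] [Module K M]
    (short : Equiv.Perm (Fin n) → Prop) (N : Equiv.Perm (Fin n) → M)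
    (barM : M → M) (C : Equiv.Perm (Fin n) → M) : Prop :=
  ∀ w, short w →
    barM (C w) = C w ∧
    ∃ R : Equiv.Perm (Fin n) → Polynomial ℤ,
      (∀ w', ¬ (short w' ∧ bruhatLT n w' w) → R w' = 0) ∧
      C w = N w + ∑ w' : Equiv.Perm (Fin n), (q * Polynomial.aeval q (R w')) • N w'

/-!
STATEMENT 3: The map `i : M^p_q → M^p_{q'}`, `N_w ↦ Σ_{x ∈ W^{q'}∩W_q} q^{ℓ(w^{q'}_q)-ℓ(x)} N_{xw}`,
is an injective homomorphism of right `H_n`-modules commuting with the bar involutions and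
sending the canonical basis element `N̲_w` to the canonical basis element `N̲_{w^{q'}_q w}`.
-/

namespace HeckeAux

section Cox

variable {n : ℕ}

lemma s_mul_self (i : Fin (n - 1)) : s n i * s n i = 1 := by
  simp [s]

lemma s_inv (i : Fin (n - 1)) : (s n i)⁻¹ = s n i := by
  simp [s]

lemma s_mul_cancel (i : Fin (n - 1)) (w : Equiv.Perm (Fin n)) : s n i * (s n i * w) = w := by
  rw [← mul_assoc, s_mul_self, one_mul]

lemma mul_s_cancel (i : Fin (n - 1)) (w : Equiv.Perm (Fin n)) : w * s n i * s n i = w := by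
  rw [mul_assoc, s_mul_self, mul_one]

@[simp] lemma wordProd_nil : wordProd n [] = 1 := by simp [wordProd]

@[simp] lemma wordProd_cons (i : Fin (n - 1)) (t : List (Fin (n - 1))) :
    wordProd n (i :: t) = s n i * wordProd n t := by simp [wordProd]

@[simp] lemma wordProd_append (t u : List (Fin (n - 1))) :
    wordProd n (t ++ u) = wordProd n t * wordProd n u := by simp [wordProd]

lemma wordProd_reverse (t : List (Fin (n - 1))) :
    wordProd n t.reverse = (wordProd n t)⁻¹ := by
  induction t with
  | nil => simp
  | cons i t ih => simp [ih, s_inv]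

lemma exists_word (w : Equiv.Perm (Fin n)) : ∃ t, wordProd n t = w := by
  cases n with
  | zero => exact ⟨[], Subsingleton.elim _ _⟩
  | succ n =>
    have h : w ∈ Submonoid.closure
        (Set.range fun i : Fin n ↦ Equiv.swap i.castSucc i.succ) := by
      rw [Equiv.Perm.mclosure_swap_castSucc_succ]; trivial
    induction h using Submonoid.closure_induction with
    | mem x hx =>
      obtain ⟨i, rfl⟩ := hx
      refine ⟨[i], ?_⟩
      simp
      rfl
    | one => exact ⟨[], wordProd_nil⟩
    | mul x y _ _ hx hy =>
      obtain ⟨t, rfl⟩ := hx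
      obtain ⟨u, rfl⟩ := hy
      exact ⟨t ++ u, wordProd_append t u⟩

lemma len_spec (w : Equiv.Perm (Fin n)) :
    ∃ t : List (Fin (n - 1)), t.length = len n w ∧ wordProd n t = w := by
  have : len n w ∈ {k | ∃ l : List (Fin (n - 1)), l.length = k ∧ wordProd n l = w} := by
    apply Nat.sInf_mem
    obtain ⟨t, ht⟩ := exists_word w
    exact ⟨t.length, t, rfl, ht⟩
  exact this

lemma len_le (t : List (Fin (n - 1))) : len n (wordProd n t) ≤ t.length :=
  Nat.sInf_le ⟨t, rfl, rfl⟩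

lemma len_one : len n (1 : Equiv.Perm (Fin n)) = 0 := by
  have := len_le (n := n) []
  simpa using this

lemma eq_one_of_len {w : Equiv.Perm (Fin n)} (h : len n w = 0) : w = 1 := by
  obtain ⟨t, ht, rfl⟩ := len_spec w
  rw [h, List.length_eq_zero_iff] at ht
  simp [ht]

lemma len_mul_le (u w : Equiv.Perm (Fin n)) : len n (u * w) ≤ len n u + len n w := by
  obtain ⟨t, ht, h1⟩ := len_spec u
  obtain ⟨t', ht', h1'⟩ := len_spec w
  have := len_le (t ++ t')
  simp [h1, h1', ht, ht'] at this
  exact this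

lemma len_inv_le (w : Equiv.Perm (Fin n)) : len n w⁻¹ ≤ len n w := by
  obtain ⟨t, ht, h1⟩ := len_spec w
  have := len_le t.reverse
  rw [wordProd_reverse, h1] at this
  simpa [ht] using this

lemma len_inv (w : Equiv.Perm (Fin n)) : len n w⁻¹ = len n w :=
  le_antisymm (len_inv_le w) (by simpa using len_inv_le w⁻¹)

lemma sign_wordProd (t : List (Fin (n - 1))) :
    Equiv.Perm.sign (wordProd n t) = (-1) ^ t.length := by
  induction t with
  | nil => simp
  | cons i t ih =>
    have : Equiv.Perm.sign (s n i) = -1 := by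
      apply Equiv.Perm.sign_swap
      intro h
      simp [Fin.ext_iff] at h
    simp [ih, this, pow_succ]

lemma sign_eq (w : Equiv.Perm (Fin n)) : Equiv.Perm.sign w = (-1) ^ len n w := by
  obtain ⟨t, ht, h1⟩ := len_spec w
  rw [← ht, ← sign_wordProd, h1]

lemma len_s_le (i : Fin (n - 1)) : len n (s n i) ≤ 1 := by
  have := len_le [i]
  simpa using this

lemma len_s_mul (i : Fin (n - 1)) (w : Equiv.Perm (Fin n)) :
    len n (s n i * w) = len n w + 1 ∨ len n w = len n (s n i * w) + 1 := by
  have h1 := len_mul_le (s n i) w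
  have h2 := len_mul_le (s n i) (s n i * w)
  rw [s_mul_cancel] at h2
  have h3 := len_s_le i
  have h4 : len n (s n i * w) ≠ len n w := by
    intro h
    have h5 := sign_eq (s n i * w)
    rw [h, ← sign_eq w, Equiv.Perm.sign_mul] at h5
    have h6 : Equiv.Perm.sign (s n i) = -1 := by
      have := sign_wordProd [i]
      simpa using this
    rw [h6] at h5
    rcases Int.units_eq_one_or (Equiv.Perm.sign w) with h7 | h7 <;> rw [h7] at h5 <;>
      exact absurd h5 (by decide)
  omega

lemma len_mul_s (i : Fin (n - 1)) (w : Equiv.Perm (Fin n)) :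
    len n (w * s n i) = len n w + 1 ∨ len n w = len n (w * s n i) + 1 := by
  have := len_s_mul i w⁻¹
  rw [← s_inv, ← mul_inv_rev, len_inv, len_inv] at this
  exact this

lemma len_s (i : Fin (n - 1)) : len n (s n i) = 1 := by
  have := len_s_mul i 1
  rw [mul_one, len_one] at this
  omega

/-- strong exchange -/
lemma strong_exchange (t : List (Fin (n - 1))) : ∀ (a b : Fin n), a < b →
    (wordProd n t)⁻¹ b < (wordProd n t)⁻¹ a →
    ∃ t1 j t2, t = t1 ++ j :: t2 ∧ Equiv.swap a b * wordProd n t = wordProd n (t1 ++ t2) := by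
  induction t with
  | nil =>
    intro a b hab h
    simp at h
    exact absurd hab (not_lt.mpr h.le)
  | cons j t ih =>
    intro a b hab h
    rw [wordProd_cons, mul_inv_rev, s_inv, Equiv.Perm.mul_apply, Equiv.Perm.mul_apply] at h
    rcases lt_trichotomy (s n j a) (s n j b) with h1 | h1 | h1
    · obtain ⟨t1, k, t2, h2, h3⟩ := ih _ _ h1 h
      refine ⟨j :: t1, k, t2, by simp [h2], ?_⟩
      rw [wordProd_cons, List.cons_append, wordProd_cons, ← h3]
      rw [← mul_assoc, ← mul_assoc, Equiv.mul_swap_eq_swap_mul]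
      congr 2
      rw [← Equiv.Perm.mul_apply, ← Equiv.Perm.mul_apply, s_mul_self]
      rfl
    · exact absurd ((s n j).injective h1) hab.ne
    · refine ⟨[], j, t, rfl, ?_⟩
      have : Equiv.swap a b = s n j := by
        have hj := j.isLt
        simp only [s, Equiv.swap_apply_def] at h1
        have : (a : ℕ) = j ∧ (b : ℕ) = j + 1 := by
          rw [Fin.lt_def] at hab
          split_ifs at h1 <;> simp only [Fin.ext_iff, Fin.lt_def] at * <;> omega
        unfold s
        congr 1
        · exact Fin.ext this.1
        · exact Fin.ext this.2
      rw [this, wordProd_cons, s_mul_cancel]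
      simp

lemma deletion (i : Fin (n - 1)) (w : Equiv.Perm (Fin n)) (h : len n (s n i * w) < len n w)
    (t : List (Fin (n - 1))) (ht : wordProd n t = w) :
    ∃ t1 j t2, t = t1 ++ j :: t2 ∧ s n i * w = wordProd n (t1 ++ t2) := by
  have hi := i.isLt
  set a : Fin n := ⟨i, by omega⟩ with ha
  set b : Fin n := ⟨i + 1, by omega⟩ with hb
  have hs : s n i = Equiv.swap a b := rfl
  have hab : a < b := by simp [ha, hb, Fin.lt_def]
  rcases lt_trichotomy (w⁻¹ b) (w⁻¹ a) with h1 | h1 | h1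
  · subst ht
    exact strong_exchange t a b hab h1
  · exact absurd (w⁻¹.injective h1) hab.ne'
  · exfalso
    obtain ⟨u, hu, hu'⟩ := len_spec (s n i * w)
    have h2 : (s n i * w)⁻¹ b < (s n i * w)⁻¹ a := by
      rw [mul_inv_rev, s_inv, Equiv.Perm.mul_apply, Equiv.Perm.mul_apply, hs,
        Equiv.swap_apply_left, Equiv.swap_apply_right]
      exact h1
    rw [← hu'] at h2
    obtain ⟨t1, j, t2, h3, h4⟩ := strong_exchange u a b hab h2
    rw [← hs, hu', s_mul_cancel] at h4
    have h5 := len_le (t1 ++ t2)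
    rw [← h4] at h5
    rw [h3] at hu
    simp at hu h5
    omega

lemma exchange (i : Fin (n - 1)) (x v : Equiv.Perm (Fin n))
    (h : len n (s n i * (x * v)) < len n (x * v)) :
    len n (s n i * x) < len n x ∨ len n (x⁻¹ * s n i * x * v) < len n v := by
  obtain ⟨tx, hx, hx'⟩ := len_spec x
  obtain ⟨tv, hv, hv'⟩ := len_spec v
  obtain ⟨t1, j, t2, h1, h2⟩ := deletion i _ h (tx ++ tv) (by simp [hx', hv'])
  rw [List.append_eq_append_iff] at h1
  rcases h1 with ⟨c, rfl, hc⟩ | ⟨c, hc, hc'⟩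
  · right
    have : x⁻¹ * s n i * x * v = wordProd n (c ++ t2) := by
      simp only [wordProd_append, hx'] at h2 ⊢
      rw [mul_assoc, mul_assoc, h2]
      group
    rw [this, ← hv, hc]
    have := len_le (c ++ t2)
    simp at this ⊢
    omega
  · cases c with
    | nil =>
      right
      simp at hc hc'
      subst hc
      have : x⁻¹ * s n i * x * v = wordProd n t2 := by
        simp only [wordProd_append, hx'] at h2 ⊢
        rw [mul_assoc, mul_assoc, h2]
        group
      rw [this, ← hv, ← hc']
      have := len_le t2
      simp at this ⊢
      omega
    | cons k c =>
      left
      simp at hc'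
      obtain ⟨rfl, rfl⟩ := hc'
      have : s n i * x = wordProd n (t1 ++ c) := by
        simp only [wordProd_append, hv', ← mul_assoc] at h2 ⊢
        exact mul_right_cancel h2
      rw [this, ← hx, hc]
      have := len_le (t1 ++ c)
      simp at this ⊢
      omega

lemma s_mem {J : Finset (Fin (n - 1))} {i : Fin (n - 1)} (h : i ∈ J) : s n i ∈ parab n J :=
  Subgroup.subset_closure ⟨i, h, rfl⟩

lemma wordProd_mem {J : Finset (Fin (n - 1))} (t : List (Fin (n - 1))) (h : ∀ j ∈ t, j ∈ J) :
    wordProd n t ∈ parab n J := by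
  induction t with
  | nil => simp [one_mem]
  | cons i t ih =>
    simp at h
    rw [wordProd_cons]
    exact mul_mem (s_mem h.1) (ih h.2)

lemma parab_mono {J J' : Finset (Fin (n - 1))} (h : J ⊆ J') : parab n J ≤ parab n J' := by
  apply Subgroup.closure_mono
  rintro _ ⟨i, hi, rfl⟩
  exact ⟨i, h hi, rfl⟩

lemma parab_word {J : Finset (Fin (n - 1))} {x : Equiv.Perm (Fin n)} (hx : x ∈ parab n J) :
    ∃ t : List (Fin (n - 1)), (∀ j ∈ t, j ∈ J) ∧ wordProd n t = x ∧ t.length = len n x := by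
  have key : ∀ i ∈ J, ∀ y : Equiv.Perm (Fin n),
      (∃ t : List (Fin (n - 1)), (∀ j ∈ t, j ∈ J) ∧ wordProd n t = y ∧ t.length = len n y) →
      (∃ t : List (Fin (n - 1)), (∀ j ∈ t, j ∈ J) ∧ wordProd n t = s n i * y ∧
        t.length = len n (s n i * y)) := by
    rintro i hi y ⟨t, ht, rfl, ht'⟩
    rcases len_s_mul i (wordProd n t) with h | h
    · refine ⟨i :: t, by simpa using ⟨hi, ht⟩, by simp, by simp [h, ht']⟩
    · obtain ⟨t1, j, t2, h1, h2⟩ := deletion i (wordProd n t) (by omega) t rfl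
      refine ⟨t1 ++ t2, ?_, h2.symm, ?_⟩
      · intro k hk
        apply ht
        rw [h1]
        simp at hk ⊢
        tauto
      · rw [h1] at ht'
        rw [← h1] at ht'
        have : t.length = (t1 ++ t2).length + 1 := by rw [h1]; simp; omega
        omega
  unfold parab at hx
  induction hx using Subgroup.closure_induction_left with
  | one => exact ⟨[], by simp, by simp, by simp [len_one]⟩
  | mul_left x hx y _ ih =>
    obtain ⟨i, hi, rfl⟩ := hx
    exact key i hi y ih
  | inv_mul_cancel x hx y _ ih =>
    obtain ⟨i, hi, rfl⟩ := hx
    rw [s_inv]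
    exact key i hi y ih

lemma parab_ind {J : Finset (Fin (n - 1))} {p : Equiv.Perm (Fin n) → Prop}
    (h1 : p 1)
    (h2 : ∀ i ∈ J, ∀ x ∈ parab n J, len n (s n i * x) = len n x + 1 → p x → p (s n i * x))
    {x : Equiv.Perm (Fin n)} (hx : x ∈ parab n J) : p x := by
  obtain ⟨t, ht, rfl, hl⟩ := parab_word hx
  clear hx
  induction t with
  | nil => simpa using h1
  | cons i t ih =>
    simp only [List.mem_cons, forall_eq_or_imp] at ht
    rw [wordProd_cons] at hl ⊢
    have h3 := len_le t
    have h4 := len_s_mul i (wordProd n t)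
    simp only [List.length_cons] at hl
    exact h2 i ht.1 _ (wordProd_mem t ht.2) (by omega) (ih ht.2 (by omega))

lemma short_add {J : Finset (Fin (n - 1))} {w : Equiv.Perm (Fin n)} (hw : IsShort n J w)
    {x : Equiv.Perm (Fin n)} (hx : x ∈ parab n J) : len n (x * w) = len n x + len n w := by
  refine parab_ind (p := fun x => len n (x * w) = len n x + len n w) ?_ ?_ hx
  · simp [len_one]
  · intro i hi x hx hl ih
    rw [mul_assoc]
    rcases len_s_mul i (x * w) with h | h
    · omega
    · exfalso
      rcases exchange i x w (by omega) with h3 | h3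
      · omega
      · have := hw (x⁻¹ * s n i * x) (mul_mem (mul_mem (inv_mem hx) (s_mem hi)) hx)
        omega

lemma short_decomp (J : Finset (Fin (n - 1))) (w : Equiv.Perm (Fin n)) :
    ∃ x ∈ parab n J, ∃ d, IsShort n J d ∧ w = x * d := by
  obtain ⟨x, hx, hm⟩ := Set.exists_min_image (parab n J : Set (Equiv.Perm (Fin n)))
    (fun x => len n (x * w)) (Set.toFinite _) ⟨1, one_mem _⟩
  refine ⟨x⁻¹, inv_mem hx, x * w, ?_, by group⟩
  intro y hy
  rw [← mul_assoc]
  exact hm _ (mul_mem hy hx)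

lemma short_unique {J : Finset (Fin (n - 1))} {d d' x x' : Equiv.Perm (Fin n)}
    (hd : IsShort n J d) (hd' : IsShort n J d') (hx : x ∈ parab n J) (hx' : x' ∈ parab n J)
    (h : x * d = x' * d') : x = x' ∧ d = d' := by
  have h1 : d = (x⁻¹ * x') * d' := by rw [mul_assoc, ← h]; group
  have h2 := short_add hd' (mul_mem (inv_mem hx) hx')
  have h1' : d' = (x'⁻¹ * x) * d := by rw [mul_assoc, h]; group
  have h2' := short_add hd (mul_mem (inv_mem hx') hx)
  rw [← h1] at h2
  rw [← h1'] at h2'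
  have h3 : x⁻¹ * x' = 1 := eq_one_of_len (by omega)
  rw [h3, one_mul] at h1
  exact ⟨(inv_mul_eq_one.mp h3), h1⟩

lemma longest_exists (J : Finset (Fin (n - 1))) :
    ∃ w ∈ parab n J, ∀ x ∈ parab n J, len n w = len n x + len n (x⁻¹ * w) := by
  obtain ⟨w, hw, hm⟩ := Set.exists_max_image (parab n J : Set (Equiv.Perm (Fin n)))
    (fun x => len n x) (Set.toFinite _) ⟨1, one_mem _⟩
  refine ⟨w, hw, ?_⟩
  intro x hx
  refine parab_ind (p := fun x => len n w = len n x + len n (x⁻¹ * w)) ?_ ?_ hx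
  · simp [len_one]
  · intro i hi x hx hl ih
    have h1 := hm (s n i * w) (mul_mem (s_mem hi) hw)
    have h2 := len_s_mul i w
    rcases exchange i x (x⁻¹ * w) (by rw [mul_inv_cancel_left]; omega) with h3 | h3
    · omega
    · have h4 : x⁻¹ * s n i * x * (x⁻¹ * w) = (s n i * x)⁻¹ * w := by
        rw [mul_inv_rev, s_inv]; group
      rw [h4] at h3
      have h5 := len_mul_le (s n i * x) ((s n i * x)⁻¹ * w)
      rw [mul_inv_cancel_left] at h5
      omega

lemma longest_unique {J : Finset (Fin (n - 1))} {w : Equiv.Perm (Fin n)}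
    (h : ∀ x ∈ parab n J, len n w = len n x + len n (x⁻¹ * w)) {x : Equiv.Perm (Fin n)}
    (hx : x ∈ parab n J) (hl : len n w ≤ len n x) : x = w := by
  have := h x hx
  exact inv_mul_eq_one.mp (eq_one_of_len (by omega))

/-- The minimal representatives of `W_{Q'} \ W_Q`. -/
def DD (n : ℕ) (Q Q' : Finset (Fin (n - 1))) : Set (Equiv.Perm (Fin n)) :=
  {x | x ∈ parab n Q ∧ ∀ y ∈ parab n Q', len n x ≤ len n (y * x)}

lemma w0_facts {Q Q' : Finset (Fin (n - 1))} (hQ : Q' ⊆ Q) {w₀ : Equiv.Perm (Fin n)}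
    (h0 : w₀ ∈ DD n Q Q') (hl : ∀ x ∈ DD n Q Q', len n x ≤ len n w₀)
    {wQ wQ' : Equiv.Perm (Fin n)} (hQm : wQ ∈ parab n Q) (hQm' : wQ' ∈ parab n Q')
    (hQl : ∀ x ∈ parab n Q, len n wQ = len n x + len n (x⁻¹ * wQ))
    (hQl' : ∀ x ∈ parab n Q', len n wQ' = len n x + len n (x⁻¹ * wQ')) :
    len n wQ = len n wQ' + len n w₀ ∧
    ∀ x ∈ DD n Q Q', x ≠ w₀ → len n x < len n w₀ := by
  obtain ⟨y, hy, d, hd, hyd⟩ := short_decomp Q' wQ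
  have hdQ : d ∈ parab n Q := by
    have : d = y⁻¹ * wQ := by rw [hyd]; group
    rw [this]
    exact mul_mem (inv_mem (parab_mono hQ hy)) hQm
  have h1 := hl d ⟨hdQ, hd⟩
  have h2 := short_add hd hy
  rw [← hyd] at h2
  have h3 := hQl' y hy
  have h4 : ∀ x ∈ DD n Q Q', len n (wQ' * x) = len n wQ' + len n x := fun x hx =>
    short_add hx.2 hQm'
  have h5 : ∀ x ∈ DD n Q Q', wQ' * x ∈ parab n Q := fun x hx =>
    mul_mem (parab_mono hQ hQm') hx.1
  have h6 := hQl _ (h5 w₀ h0)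
  have h7 := h4 _ h0
  refine ⟨by omega, ?_⟩
  intro x hx hne
  refine lt_of_le_of_ne (hl x hx) ?_
  intro he
  apply hne
  have h8 := longest_unique hQl (h5 w₀ h0) (by omega)
  have h9 := longest_unique hQl (h5 x hx) (by rw [h4 x hx]; omega)
  exact mul_left_cancel (h9.trans h8.symm)


lemma s_not_mem {P Q : Finset (Fin (n - 1))}
    (hPQ : ∀ i ∈ P, ∀ j ∈ Q, s n i * s n j = s n j * s n i) (hd : Disjoint P Q)
    {i : Fin (n - 1)} (hi : i ∈ P) : s n i ∉ parab n Q := by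
  have hi' := i.isLt
  set a : Fin n := ⟨i, by omega⟩ with ha
  set b : Fin n := ⟨i + 1, by omega⟩ with hb
  have hs : s n i = Equiv.swap a b := rfl
  have hle : parab n Q ≤ MulAction.stabilizer (Equiv.Perm (Fin n)) a := by
    unfold parab
    rw [Subgroup.closure_le]
    rintro _ ⟨j, hj, rfl⟩
    have hj' := j.isLt
    have hij : (i : ℕ) ≠ j := by
      intro h
      exact Finset.disjoint_left.mp hd hi (by rwa [Fin.ext h])
    have hc := hPQ i hi j hj
    change s n j a = a
    have h1 := congrArg (fun f : Equiv.Perm (Fin n) => (f a : ℕ)) hc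
    have h2 := congrArg (fun f : Equiv.Perm (Fin n) => (f b : ℕ)) hc
    simp only [s, Equiv.Perm.mul_apply, Equiv.swap_apply_def, Fin.ext_iff, ha, hb] at h1 h2 ⊢
    split_ifs at h1 h2 ⊢ <;> simp only [Fin.ext_iff] at * <;> omega
  intro hmem
  have h3 : s n i a = a := hle hmem
  rw [hs, Equiv.swap_apply_left] at h3
  simp [ha, hb, Fin.ext_iff] at h3

lemma parab_comm {P Q : Finset (Fin (n - 1))}
    (hPQ : ∀ i ∈ P, ∀ j ∈ Q, s n i * s n j = s n j * s n i)
    {a b : Equiv.Perm (Fin n)} (ha : a ∈ parab n P) (hb : b ∈ parab n Q) : a * b = b * a := by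
  have h1 : ∀ i ∈ P, s n i * b = b * s n i := by
    intro i hi
    refine parab_ind (p := fun b => s n i * b = b * s n i) (by simp) ?_ hb
    intro j hj x _ _ ih
    rw [← mul_assoc, hPQ i hi j hj, mul_assoc, ih, mul_assoc]
  refine parab_ind (p := fun a => a * b = b * a) (by simp) ?_ ha
  intro j hj x _ _ ih
  rw [mul_assoc, ih, ← mul_assoc, h1 j hj, mul_assoc]

lemma short_of_comm {P Q : Finset (Fin (n - 1))}
    (hPQ : ∀ i ∈ P, ∀ j ∈ Q, s n i * s n j = s n j * s n i) (hd : Disjoint P Q)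
    {b : Equiv.Perm (Fin n)} (hb : b ∈ parab n Q) : IsShort n P b := by
  obtain ⟨x, hx, d, hsd, hbd⟩ := short_decomp P b
  have hl := short_add hsd hx
  obtain ⟨t, ht, htx, htl⟩ := parab_word hx
  cases t with
  | nil =>
    simp at htx
    rw [hbd, ← htx, one_mul]
    exact hsd
  | cons i t =>
    exfalso
    simp only [List.mem_cons, forall_eq_or_imp] at ht
    rw [wordProd_cons] at htx
    have h1 : s n i * b = wordProd n t * d := by
      rw [hbd, ← htx, mul_assoc, s_mul_cancel]
    have h2 := short_add hsd (wordProd_mem t ht.2)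
    have h3 := len_le t
    simp only [List.length_cons] at htl
    obtain ⟨u, hu, hub, _⟩ := parab_word hb
    obtain ⟨t1, j, t2, h4, h5⟩ := deletion i b (by rw [h1, h2]; rw [hbd, hl]; omega) u hub
    apply s_not_mem hPQ hd ht.1
    have h6 : s n i = wordProd n (t1 ++ t2) * b⁻¹ := by rw [← h5]; group
    rw [h6]
    refine mul_mem (wordProd_mem _ ?_) (inv_mem hb)
    intro k hk
    apply hu
    rw [h4]
    simp at hk ⊢
    tauto

lemma comm_add {P Q : Finset (Fin (n - 1))}
    (hPQ : ∀ i ∈ P, ∀ j ∈ Q, s n i * s n j = s n j * s n i) (hd : Disjoint P Q)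
    {a b : Equiv.Perm (Fin n)} (ha : a ∈ parab n P) (hb : b ∈ parab n Q) :
    len n (a * b) = len n a + len n b :=
  short_add (short_of_comm hPQ hd hb) ha

lemma parab_union {P Q : Finset (Fin (n - 1))}
    (hPQ : ∀ i ∈ P, ∀ j ∈ Q, s n i * s n j = s n j * s n i)
    {y : Equiv.Perm (Fin n)} (hy : y ∈ parab n (P ∪ Q)) :
    ∃ a ∈ parab n P, ∃ c ∈ parab n Q, y = a * c := by
  refine parab_ind (p := fun y => ∃ a ∈ parab n P, ∃ c ∈ parab n Q, y = a * c) ?_ ?_ hy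
  · exact ⟨1, one_mem _, 1, one_mem _, by simp⟩
  · rintro i hi x _ _ ⟨a, ha, c, hc, rfl⟩
    rcases Finset.mem_union.mp hi with hi | hi
    · exact ⟨s n i * a, mul_mem (s_mem hi) ha, c, hc, by rw [mul_assoc]⟩
    · refine ⟨a, ha, s n i * c, mul_mem (s_mem hi) hc, ?_⟩
      rw [← mul_assoc, ← mul_assoc, parab_comm hPQ ha (s_mem hi)]

lemma xw_short {P Q Q' : Finset (Fin (n - 1))}
    (hPQ : ∀ i ∈ P, ∀ j ∈ Q, s n i * s n j = s n j * s n i) (hd : Disjoint P Q)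
    (hQ : Q' ⊆ Q) {x w : Equiv.Perm (Fin n)} (hx : x ∈ DD n Q Q')
    (hw : IsShort n (P ∪ Q) w) : IsShort n (P ∪ Q') (x * w) := by
  intro y hy
  obtain ⟨a, ha, c, hc, rfl⟩ := parab_union (fun i hi j hj => hPQ i hi j (hQ hj)) hy
  have hcx : c * x ∈ parab n Q := mul_mem (parab_mono hQ hc) hx.1
  have hcx' := parab_mono (Finset.subset_union_right (s₁ := P)) hcx
  have hx' := parab_mono (Finset.subset_union_right (s₁ := P)) hx.1
  have ha' := parab_mono (Finset.subset_union_left (s₂ := Q)) ha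
  have h1 : a * c * (x * w) = (a * (c * x)) * w := by group
  rw [h1, short_add hw (mul_mem ha' hcx'), short_add hw hx', comm_add hPQ hd ha hcx]
  have := hx.2 c hc
  omega

end Cox

section Hecke

lemma q_ne : q ≠ 0 := RatFunc.X_ne_zero

lemma zpow_ne (z : ℤ) : q ^ z ≠ 0 := zpow_ne_zero z q_ne

variable {n : ℕ} {A : Type} [Ring A] [Algebra K A]

structure HD (n : ℕ) {A : Type} [Ring A] [Algebra K A] (H : Equiv.Perm (Fin n) → A) : Prop where
  one : H 1 = 1
  mul : ∀ (w : Equiv.Perm (Fin n)) (i : Fin (n - 1)),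
      len n (w * s n i) = len n w + 1 → H (w * s n i) = H w * H (s n i)
  quad : ∀ i : Fin (n - 1),
      H (s n i) * H (s n i) = (q⁻¹ - q) • H (s n i) + 1

variable {H : Equiv.Perm (Fin n) → A}

lemma H_word (h : HD n H) (t : List (Fin (n - 1))) : ∀ x : Equiv.Perm (Fin n),
    len n (x * wordProd n t) = len n x + t.length →
    H (x * wordProd n t) = H x * (t.map (fun i => H (s n i))).prod := by
  induction t using List.reverseRecOn with
  | nil => simp
  | append_singleton t i ih =>
    intro x hx
    simp only [wordProd_append, wordProd_cons, wordProd_nil, mul_one, List.length_append,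
      List.length_cons, List.length_nil, ← mul_assoc] at hx ⊢
    have h1 := len_mul_le x (wordProd n t)
    have h2 := len_le t
    have h3 := len_mul_s i (x * wordProd n t)
    rw [h.mul _ _ (by omega), ih x (by omega)]
    simp [mul_assoc]

lemma H_mul (h : HD n H) {x y : Equiv.Perm (Fin n)} (hl : len n (x * y) = len n x + len n y) :
    H (x * y) = H x * H y := by
  obtain ⟨t, ht, rfl⟩ := len_spec y
  rw [← ht] at hl
  rw [H_word h t x hl]
  have := H_word h t 1 (by simp [len_one, ht])
  rw [one_mul, h.one, one_mul] at this
  rw [this]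

lemma H_mul_s (h : HD n H) (w : Equiv.Perm (Fin n)) (i : Fin (n - 1)) :
    H w * H (s n i) = H (w * s n i) +
      (if len n (w * s n i) = len n w + 1 then (0 : K) else (q⁻¹ - q)) • H w := by
  split_ifs with hl
  · simp [h.mul w i hl]
  · have h1 := len_mul_s i w
    have h2 : H w = H (w * s n i) * H (s n i) := by
      rw [← h.mul _ _ (by rw [mul_s_cancel]; omega), mul_s_cancel]
    have h3 : H w * H (s n i) = H (w * s n i) * (H (s n i) * H (s n i)) := by
      rw [← mul_assoc, ← h2]
    rw [h3, h.quad, mul_add, mul_smul_comm, ← h2, mul_one, add_comm]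

lemma H_s_mul (h : HD n H) (w : Equiv.Perm (Fin n)) (i : Fin (n - 1)) :
    H (s n i) * H w = H (s n i * w) +
      (if len n (s n i * w) = len n w + 1 then (0 : K) else (q⁻¹ - q)) • H w := by
  split_ifs with hl
  · rw [zero_smul, add_zero, H_mul h]
    rw [hl, len_s]; omega
  · have h1 := len_s_mul i w
    have h2 : H w = H (s n i) * H (s n i * w) := by
      rw [← H_mul h, s_mul_cancel]
      rw [s_mul_cancel, len_s]; omega
    have h3 : H (s n i) * H w = (H (s n i) * H (s n i)) * H (s n i * w) := by
      rw [mul_assoc, ← h2]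
    rw [h3, h.quad, add_mul, smul_mul_assoc, ← h2, one_mul, add_comm]

/-- coefficient of the symmetrizer -/
def cf (n : ℕ) (J : Finset (Fin (n - 1))) (x : Equiv.Perm (Fin n)) : K :=
  if x ∈ parab n J then q ^ (-(len n x : ℤ)) else 0

/-- the symmetrizer -/
def ee (n : ℕ) {A : Type} [Ring A] [Algebra K A] (H : Equiv.Perm (Fin n) → A)
    (J : Finset (Fin (n - 1))) : A := ∑ x : Equiv.Perm (Fin n), cf n J x • H x

/-- the Poincare polynomial -/
def pp (n : ℕ) (J : Finset (Fin (n - 1))) : K :=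
  ∑ x : Equiv.Perm (Fin n), cf n J x * q ^ (-(len n x : ℤ))

lemma q_rel (a b : ℤ) (h : b = a + 1) : q ^ (-b) + 0 * q ^ (-a) = q⁻¹ * q ^ (-a) := by
  subst h
  rw [neg_add, zpow_add₀ q_ne, zpow_neg_one]; ring

lemma q_rel' (a b : ℤ) (h : a = b + 1) :
    q ^ (-b) + (q⁻¹ - q) * q ^ (-a) = q⁻¹ * q ^ (-a) := by
  subst h
  rw [neg_add, zpow_add₀ q_ne, zpow_neg_one]
  have := q_ne
  field_simp
  ring

lemma ee_mul_s (h : HD n H) {J : Finset (Fin (n - 1))} {i : Fin (n - 1)} (hi : i ∈ J) :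
    ee n H J * H (s n i) = q⁻¹ • ee n H J := by
  unfold ee
  rw [Finset.sum_mul, Finset.smul_sum]
  simp only [smul_mul_assoc, H_mul_s h, smul_add, smul_smul]
  rw [Finset.sum_add_distrib]
  have h1 : ∑ x : Equiv.Perm (Fin n), cf n J x • H (x * s n i) =
      ∑ x : Equiv.Perm (Fin n), cf n J (x * s n i) • H x := by
    rw [← Equiv.sum_comp (Equiv.mulRight (s n i))]
    simp only [Equiv.coe_mulRight, mul_s_cancel]
  rw [h1, ← Finset.sum_add_distrib]
  apply Finset.sum_congr rfl
  intro x _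
  rw [← add_smul]
  congr 1
  have hm : x * s n i ∈ parab n J ↔ x ∈ parab n J := Subgroup.mul_mem_cancel_right _ (s_mem hi)
  unfold cf
  rw [hm]
  by_cases hx : x ∈ parab n J
  · simp only [hx, if_true]
    have h2 := len_mul_s i x
    split_ifs with h3
    · rw [mul_comm _ (0 : K)]
      exact q_rel _ _ (by omega)
    · rw [mul_comm _ (q⁻¹ - q)]
      exact q_rel' _ _ (by omega)
  · simp [hx]

lemma s_mul_ee (h : HD n H) {J : Finset (Fin (n - 1))} {i : Fin (n - 1)} (hi : i ∈ J) :
    H (s n i) * ee n H J = q⁻¹ • ee n H J := by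
  unfold ee
  rw [Finset.mul_sum, Finset.smul_sum]
  simp only [mul_smul_comm, H_s_mul h, smul_add, smul_smul]
  rw [Finset.sum_add_distrib]
  have h1 : ∑ x : Equiv.Perm (Fin n), cf n J x • H (s n i * x) =
      ∑ x : Equiv.Perm (Fin n), cf n J (s n i * x) • H x := by
    rw [← Equiv.sum_comp (Equiv.mulLeft (s n i))]
    simp only [Equiv.coe_mulLeft, s_mul_cancel]
  rw [h1, ← Finset.sum_add_distrib]
  apply Finset.sum_congr rfl
  intro x _
  rw [← add_smul]
  congr 1
  have hm : s n i * x ∈ parab n J ↔ x ∈ parab n J := Subgroup.mul_mem_cancel_left _ (s_mem hi)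
  unfold cf
  rw [hm]
  by_cases hx : x ∈ parab n J
  · simp only [hx, if_true]
    have h2 := len_s_mul i x
    split_ifs with h3
    · rw [mul_comm _ (0 : K)]
      exact q_rel _ _ (by omega)
    · rw [mul_comm _ (q⁻¹ - q)]
      exact q_rel' _ _ (by omega)
  · simp [hx]

lemma H_s_x (h : HD n H) {i : Fin (n - 1)} {x : Equiv.Perm (Fin n)}
    (hl : len n (s n i * x) = len n x + 1) : H (s n i * x) = H (s n i) * H x := by
  apply H_mul h
  rw [len_s]; omega

lemma q_succ (a b : ℕ) (h : b = a + 1) : q⁻¹ * q ^ (-(a : ℤ)) = q ^ (-(b : ℤ)) := by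
  subst h
  push_cast
  rw [neg_add, zpow_add₀ q_ne, zpow_neg_one, mul_comm]

lemma H_mul_ee (h : HD n H) {J : Finset (Fin (n - 1))} {x : Equiv.Perm (Fin n)}
    (hx : x ∈ parab n J) : H x * ee n H J = q ^ (-(len n x : ℤ)) • ee n H J := by
  refine parab_ind (p := fun x => H x * ee n H J = q ^ (-(len n x : ℤ)) • ee n H J) ?_ ?_ hx
  · simp [len_one, h.one]
  · intro i hi x hx hl ih
    rw [H_s_x h hl, mul_assoc, ih, mul_smul_comm, s_mul_ee h hi, smul_smul, mul_comm,
      q_succ _ _ hl]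

variable {M : Type} [AddCommGroup M] [Module K M]

lemma act_H (h : HD n H) (T : M →ₗ[K] A →ₗ[K] M)
    (hT1 : ∀ m, T m 1 = m)
    (hT : ∀ m a b, T m (a * b) = T (T m a) b) {J : Finset (Fin (n - 1))} {u : M}
    (hu : ∀ i ∈ J, T u (H (s n i)) = q⁻¹ • u) {x : Equiv.Perm (Fin n)}
    (hx : x ∈ parab n J) : T u (H x) = q ^ (-(len n x : ℤ)) • u := by
  refine parab_ind (p := fun x => T u (H x) = q ^ (-(len n x : ℤ)) • u) ?_ ?_ hx
  · simp [len_one, h.one, hT1]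
  · intro i hi x hx hl ih
    rw [H_s_x h hl, hT, hu i hi, map_smul, LinearMap.smul_apply, ih, smul_smul, q_succ _ _ hl]

lemma act_ee (h : HD n H) (T : M →ₗ[K] A →ₗ[K] M)
    (hT1 : ∀ m, T m 1 = m)
    (hT : ∀ m a b, T m (a * b) = T (T m a) b) {J : Finset (Fin (n - 1))} {u : M}
    (hu : ∀ i ∈ J, T u (H (s n i)) = q⁻¹ • u) :
    T u (ee n H J) = pp n J • u := by
  unfold ee pp
  rw [map_sum, Finset.sum_smul]
  apply Finset.sum_congr rfl
  intro x _
  rw [map_smul]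
  by_cases hx : x ∈ parab n J
  · rw [act_H h T hT1 hT hu hx, smul_smul]
  · simp [cf, hx]

variable {barK : K →+* K}

lemma barK_zpow (hq : barK q = q⁻¹) (z : ℤ) : barK (q ^ z) = q ^ (-z) := by
  rw [map_zpow₀, hq, inv_zpow']

lemma barK_cf_mul (hq : barK q = q⁻¹) (J : Finset (Fin (n - 1))) (x : Equiv.Perm (Fin n)) :
    barK (cf n J x * q ^ (-(len n x : ℤ))) =
      if x ∈ parab n J then q ^ (2 * (len n x)) else 0 := by
  unfold cf
  split_ifs
  · rw [← zpow_add₀ q_ne, barK_zpow hq, ← zpow_natCast]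
    congr 1
    push_cast
    ring
  · simp

lemma pp_ne (hq : barK q = q⁻¹) (J : Finset (Fin (n - 1))) : pp n J ≠ 0 := by
  intro h0
  have h1 : barK (pp n J) = 0 := by rw [h0, map_zero]
  unfold pp at h1
  rw [map_sum] at h1
  simp only [barK_cf_mul hq] at h1
  set F : Polynomial ℂ := ∑ x : Equiv.Perm (Fin n),
    if x ∈ parab n J then Polynomial.X ^ (2 * (len n x)) else 0 with hF
  have h2 : algebraMap (Polynomial ℂ) K F = 0 := by
    rw [hF, map_sum, ← h1]
    apply Finset.sum_congr rfl
    intro x _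
    split_ifs
    · rw [map_pow, RatFunc.algebraMap_X]; rfl
    · simp
  have h3 : F = 0 := by
    apply RatFunc.algebraMap_injective ℂ
    rw [map_zero]; exact h2
  have h4 : Polynomial.eval 1 F = 0 := by rw [h3]; simp
  rw [hF, Polynomial.eval_finsetSum] at h4
  have h5 : ∀ x : Equiv.Perm (Fin n), Polynomial.eval (1 : ℂ)
      (if x ∈ parab n J then Polynomial.X ^ (2 * (len n x)) else 0) =
      if x ∈ parab n J then 1 else 0 := by
    intro x; split_ifs <;> simp
  simp only [h5, Finset.sum_boole] at h4
  have h6 : (Finset.univ.filter (fun x : Equiv.Perm (Fin n) => x ∈ parab n J)) = ∅ := by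
    rw [← Finset.card_eq_zero]; exact_mod_cast h4
  have h7 : (1 : Equiv.Perm (Fin n)) ∈
      (Finset.univ.filter (fun x : Equiv.Perm (Fin n) => x ∈ parab n J)) := by
    simp [one_mem]
  rw [h6] at h7
  simp at h7

lemma bar_pp (hq : barK q = q⁻¹) {J : Finset (Fin (n - 1))} {wJ : Equiv.Perm (Fin n)}
    (hm : wJ ∈ parab n J)
    (hl : ∀ x ∈ parab n J, len n wJ = len n x + len n (x⁻¹ * wJ)) :
    barK (pp n J) = q ^ (2 * (len n wJ : ℤ)) * pp n J := by
  unfold pp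
  rw [map_sum, Finset.mul_sum]
  rw [← Equiv.sum_comp ((Equiv.inv (Equiv.Perm (Fin n))).trans (Equiv.mulRight wJ))]
  apply Finset.sum_congr rfl
  intro x _
  simp only [Equiv.trans_apply, Equiv.inv_apply, Equiv.coe_mulRight]
  rw [barK_cf_mul hq]
  have h1 : x⁻¹ * wJ ∈ parab n J ↔ x ∈ parab n J := by
    rw [Subgroup.mul_mem_cancel_right _ hm, inv_mem_iff]
  rw [h1]
  unfold cf
  split_ifs with hx
  · rw [← zpow_add₀ q_ne, ← zpow_add₀ q_ne, ← zpow_natCast]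
    congr 1
    have := hl x hx
    push_cast
    omega
  · simp

lemma bar_ee (h : HD n H) (hq : barK q = q⁻¹) (bar : A →+* A)
    (hbar_smul : ∀ (c : K) (x : A), bar (c • x) = barK c • bar x)
    (hbarH : ∀ w : Equiv.Perm (Fin n),
      bar (H w) * H w⁻¹ = 1 ∧ H w⁻¹ * bar (H w) = 1)
    {J : Finset (Fin (n - 1))} {wJ : Equiv.Perm (Fin n)}
    (hm : wJ ∈ parab n J)
    (hl : ∀ x ∈ parab n J, len n wJ = len n x + len n (x⁻¹ * wJ)) :
    bar (ee n H J) = q ^ (2 * (len n wJ : ℤ)) • ee n H J := by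
  have h1 : bar (ee n H J) * ee n H J = pp n J • bar (ee n H J) := by
    have := act_ee h (LinearMap.mul K A) (by simp) (by simp [mul_assoc]) (J := J)
      (u := bar (ee n H J)) ?_
    · simpa using this
    · intro i hi
      have h2 := congrArg bar (ee_mul_s h hi)
      rw [map_mul, hbar_smul, map_inv₀, hq, inv_inv] at h2
      have h3 := congrArg (fun z => q⁻¹ • (z * H (s n i))) h2
      have h4 := (hbarH (s n i)).1
      rw [s_inv] at h4
      simp only [mul_assoc, h4, mul_one, smul_mul_assoc, smul_smul,
        inv_mul_cancel₀ q_ne, one_smul] at h3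
      simpa using h3.symm
  have h2 : bar (ee n H J) * ee n H J = barK (pp n J) • ee n H J := by
    have h3 : bar (ee n H J) = ∑ x : Equiv.Perm (Fin n), barK (cf n J x) • bar (H x) := by
      unfold ee
      rw [map_sum]
      simp only [hbar_smul]
    rw [h3]
    conv_rhs => unfold pp
    rw [map_sum, Finset.sum_smul, Finset.sum_mul]
    apply Finset.sum_congr rfl
    intro x _
    by_cases hx : x ∈ parab n J
    · have h4 := H_mul_ee h (inv_mem hx)
      have h5 := congrArg (fun z => q ^ (len n x : ℤ) • (bar (H x) * z)) h4
      simp only [← mul_assoc, (hbarH x).1, len_inv, mul_smul_comm, smul_smul, one_mul] at h5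
      rw [← zpow_add₀ q_ne, add_neg_cancel, zpow_zero, one_smul] at h5
      rw [smul_mul_assoc, ← h5, smul_smul, map_mul, barK_zpow hq, neg_neg]
    · simp [cf, hx]
  rw [h1, bar_pp hq hm hl, mul_comm, mul_smul] at h2
  exact smul_right_injective A (pp_ne hq J) h2

end Hecke

section Mod

lemma aeval_q_inj {F G : Polynomial ℤ} (h : Polynomial.aeval q F = Polynomial.aeval q G) :
    F = G := by
  have h1 : ∀ F : Polynomial ℤ, Polynomial.aeval q F =
      algebraMap (Polynomial ℂ) K (F.map (Int.castRingHom ℂ)) := by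
    intro F
    induction F using Polynomial.induction_on' with
    | add p r hp hr => simp [hp, hr]
    | monomial k a =>
      simp [← Polynomial.C_mul_X_pow_eq_monomial, q]
  rw [h1, h1] at h
  exact Polynomial.map_injective _ (RingHom.injective_int _) (RatFunc.algebraMap_injective ℂ h)

lemma bar_poly {barK : K →+* K} (hq : barK q = q⁻¹) {G : Polynomial ℤ}
    (h : barK (q * Polynomial.aeval q G) = q * Polynomial.aeval q G) : G = 0 := by
  set F : Polynomial ℤ := Polynomial.X * G with hF
  have h1 : q * Polynomial.aeval q G = Polynomial.aeval q F := by simp [hF]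
  rw [h1, Polynomial.aeval_def, Polynomial.hom_eval₂, hq,
    Subsingleton.elim (barK.comp (algebraMap ℤ K)) (algebraMap ℤ K)] at h
  let _ : Invertible (q⁻¹ : K) := invertibleOfNonzero (inv_ne_zero q_ne)
  have h2 := Polynomial.eval₂_reverse_mul_pow (algebraMap ℤ K) (q⁻¹ : K) F
  rw [invOf_eq_inv, inv_inv, h] at h2
  have h3 : Polynomial.aeval q F.reverse = Polynomial.aeval q (Polynomial.X ^ F.natDegree * F) := by
    rw [map_mul, map_pow, Polynomial.aeval_X, Polynomial.aeval_def, Polynomial.aeval_def, ← h2,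
      inv_pow]
    have := pow_ne_zero F.natDegree q_ne
    field_simp
  have h4 := aeval_q_inj h3
  by_contra hG
  have hF0 : F ≠ 0 := mul_ne_zero Polynomial.X_ne_zero hG
  have h5 := Polynomial.reverse_natDegree_le F
  rw [h4, Polynomial.natDegree_X_pow_mul _ hF0] at h5
  have h6 : F.natDegree = G.natDegree + 1 := Polynomial.natDegree_X_mul hG
  omega

/-- membership in `q ℤ[q]` -/
def InZ (f : K) : Prop := ∃ G : Polynomial ℤ, f = q * Polynomial.aeval q G

/-- membership in `ℤ[q]` -/
def InZ0 (f : K) : Prop := ∃ G : Polynomial ℤ, f = Polynomial.aeval q G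

lemma InZ.add {f g : K} (hf : InZ f) (hg : InZ g) : InZ (f + g) := by
  obtain ⟨F, rfl⟩ := hf
  obtain ⟨G, rfl⟩ := hg
  exact ⟨F + G, by simp [mul_add]⟩

lemma InZ.sub {f g : K} (hf : InZ f) (hg : InZ g) : InZ (f - g) := by
  obtain ⟨F, rfl⟩ := hf
  obtain ⟨G, rfl⟩ := hg
  exact ⟨F - G, by simp [mul_sub]⟩

lemma InZ.zero : InZ 0 := ⟨0, by simp⟩

lemma InZ.mul {f g : K} (hf : InZ f) (hg : InZ0 g) : InZ (f * g) := by
  obtain ⟨F, rfl⟩ := hf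
  obtain ⟨G, rfl⟩ := hg
  exact ⟨F * G, by simp [mul_assoc]⟩

lemma InZ.sum {ι : Type*} (t : Finset ι) {f : ι → K} (h : ∀ i ∈ t, InZ (f i)) :
    InZ (∑ i ∈ t, f i) :=
  Finset.sum_induction f InZ (fun _ _ => InZ.add) InZ.zero h

lemma InZ0.mul {f g : K} (hf : InZ0 f) (hg : InZ0 g) : InZ0 (f * g) := by
  obtain ⟨F, rfl⟩ := hf
  obtain ⟨G, rfl⟩ := hg
  exact ⟨F * G, by simp⟩

lemma InZ0.sum {ι : Type*} (t : Finset ι) {f : ι → K} (h : ∀ i ∈ t, InZ0 (f i)) :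
    InZ0 (∑ i ∈ t, f i) := by
  refine Finset.sum_induction f InZ0 ?_ ⟨0, by simp⟩ h
  rintro _ _ ⟨F, rfl⟩ ⟨G, rfl⟩
  exact ⟨F + G, by simp⟩

lemma InZ0_zpow {a b : ℕ} (h : a ≤ b) : InZ0 (q ^ ((b : ℤ) - (a : ℤ))) := by
  refine ⟨Polynomial.X ^ (b - a), ?_⟩
  rw [map_pow, Polynomial.aeval_X, ← zpow_natCast, Nat.cast_sub h]

lemma InZ_zpow {a b : ℕ} (h : a < b) : InZ (q ^ ((b : ℤ) - (a : ℤ))) := by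
  refine ⟨Polynomial.X ^ (b - a - 1), ?_⟩
  rw [map_pow, Polynomial.aeval_X, ← pow_succ', ← zpow_natCast]
  congr 1
  omega

variable {n : ℕ} {A : Type} [Ring A] [Algebra K A] {H : Equiv.Perm (Fin n) → A}

lemma mem_parab_univ (w : Equiv.Perm (Fin n)) : w ∈ parab n Finset.univ := by
  obtain ⟨t, rfl⟩ := exists_word w
  exact wordProd_mem t (by simp)

lemma ee_factor (h : HD n H) {Q Q' : Finset (Fin (n - 1))} (hQ : Q' ⊆ Q) :
    ee n H Q = ee n H Q' * ∑ x ∈ Finset.univ.filter (· ∈ DD n Q Q'),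
      q ^ (-(len n x : ℤ)) • H x := by
  have hee : ∀ J : Finset (Fin (n - 1)), ee n H J =
      ∑ x ∈ Finset.univ.filter (· ∈ parab n J), q ^ (-(len n x : ℤ)) • H x := by
    intro J
    unfold ee cf
    rw [Finset.sum_filter]
    apply Finset.sum_congr rfl
    intro x _
    split_ifs <;> simp
  rw [hee, hee, Finset.sum_mul_sum, ← Finset.sum_product']
  symm
  refine Finset.sum_nbij (fun p => p.1 * p.2) ?_ ?_ ?_ ?_
  · rintro ⟨y, x⟩ hp
    simp only [Finset.mem_product, Finset.mem_filter, Finset.mem_univ, true_and] at hp ⊢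
    exact mul_mem (parab_mono hQ hp.1) hp.2.1
  · rintro ⟨y, x⟩ hp ⟨y', x'⟩ hp' he
    simp only [Finset.coe_product, Set.mem_prod, Finset.coe_filter, Set.mem_ofPred_eq,
      Finset.mem_univ, true_and] at hp hp'
    obtain ⟨h1, h2⟩ := short_unique hp.2.2 hp'.2.2 hp.1 hp'.1 he
    simp [h1, h2]
  · intro z hz
    simp only [Finset.coe_filter, Set.mem_ofPred_eq, Finset.mem_univ, true_and] at hz
    obtain ⟨y, hy, d, hd, rfl⟩ := short_decomp Q' z
    refine ⟨(y, d), ?_, rfl⟩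
    simp only [Finset.coe_product, Set.mem_prod, Finset.coe_filter, Set.mem_ofPred_eq,
      Finset.mem_univ, true_and]
    exact ⟨hy, (Subgroup.mul_mem_cancel_left _ (parab_mono hQ hy)).mp hz, hd⟩
  · rintro ⟨y, x⟩ hp
    simp only [Finset.mem_product, Finset.mem_filter, Finset.mem_univ, true_and] at hp
    have hl := short_add hp.2.2 hp.1
    simp only [smul_mul_smul_comm]
    rw [← H_mul h hl, hl, ← zpow_add₀ q_ne]
    congr 2
    push_cast
    ring

lemma bar_tri (h : HD n H) (bar : A →+* A)
    (hbarH : ∀ w : Equiv.Perm (Fin n),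
      bar (H w) * H w⁻¹ = 1 ∧ H w⁻¹ * bar (H w) = 1) (w : Equiv.Perm (Fin n)) :
    bar (H w) - H w ∈ Submodule.span K (H '' {y | len n y < len n w}) := by
  refine parab_ind (p := fun w => bar (H w) - H w ∈
    Submodule.span K (H '' {y | len n y < len n w})) ?_ ?_ (mem_parab_univ w)
  · rw [h.one, map_one, sub_self]; exact zero_mem _
  · intro i _ x _ hl ih
    have hbs : bar (H (s n i)) = H (s n i) - (q⁻¹ - q) • 1 := by
      have h1 := (hbarH (s n i)).1
      rw [s_inv] at h1
      have h2 : H (s n i) * (H (s n i) - (q⁻¹ - q) • 1) = 1 := by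
        rw [mul_sub, h.quad, mul_smul_comm, mul_one]; abel
      calc bar (H (s n i)) = bar (H (s n i)) * (H (s n i) * (H (s n i) - (q⁻¹ - q) • 1)) := by
            rw [h2, mul_one]
        _ = _ := by rw [← mul_assoc, h1, one_mul]
    set f := bar (H x) - H x with hf
    have hbx : bar (H x) = H x + f := by rw [hf]; abel
    have h3 : bar (H (s n i * x)) - H (s n i * x) =
        H (s n i) * f - (q⁻¹ - q) • H x - (q⁻¹ - q) • f := by
      rw [H_s_x h hl, map_mul, hbs, hbx]
      simp only [sub_mul, mul_add, smul_mul_assoc, one_mul]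
      abel
    rw [h3, hl]
    have hmono : Submodule.span K (H '' {y | len n y < len n x}) ≤
        Submodule.span K (H '' {y | len n y < len n x + 1}) := by
      apply Submodule.span_mono
      apply Set.image_mono
      intro y hy
      simp only [Set.mem_ofPred_eq] at hy ⊢
      omega
    refine sub_mem (sub_mem ?_ (Submodule.smul_mem _ _ (Submodule.subset_span ⟨x, by simp, rfl⟩)))
      (Submodule.smul_mem _ _ (hmono ih))
    have h4 : Submodule.span K (H '' {y | len n y < len n x}) ≤
        (Submodule.span K (H '' {y | len n y < len n x + 1})).comap
          (LinearMap.mulLeft K (H (s n i))) := by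
      rw [Submodule.span_le]
      rintro _ ⟨y, hy, rfl⟩
      simp only [Set.mem_ofPred_eq] at hy
      simp only [Submodule.comap_coe, Set.mem_preimage, LinearMap.mulLeft_apply, SetLike.mem_coe]
      rw [H_s_mul h]
      have h5 := len_s_mul i y
      refine add_mem (Submodule.subset_span ⟨_, ?_, rfl⟩)
        (Submodule.smul_mem _ _ (Submodule.subset_span ⟨_, ?_, rfl⟩))
      · simp only [Set.mem_ofPred_eq]; omega
      · simp only [Set.mem_ofPred_eq]; omega
    exact h4 ih

variable {M : Type} [AddCommGroup M] [Module K M]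

/-- two vectors with the same character on generators have the same character -/
lemma char_common (h : HD n H) {M' : Type} [AddCommGroup M'] [Module K M']
    (T : M →ₗ[K] A →ₗ[K] M) (hT1 : ∀ m, T m 1 = m)
    (hT : ∀ m a b, T m (a * b) = T (T m a) b)
    (T' : M' →ₗ[K] A →ₗ[K] M') (hT1' : ∀ m, T' m 1 = m)
    (hT' : ∀ m a b, T' m (a * b) = T' (T' m a) b)
    {J : Finset (Fin (n - 1))} {u : M} {u' : M'}
    (hu : ∀ i ∈ J, ∃ c : K, T u (H (s n i)) = c • u ∧ T' u' (H (s n i)) = c • u')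
    {x : Equiv.Perm (Fin n)} (hx : x ∈ parab n J) :
    ∃ c : K, T u (H x) = c • u ∧ T' u' (H x) = c • u' := by
  refine parab_ind (p := fun x => ∃ c : K, T u (H x) = c • u ∧ T' u' (H x) = c • u') ?_ ?_ hx
  · exact ⟨1, by simp [h.one, hT1], by simp [h.one, hT1']⟩
  · rintro i hi x hx hl ⟨c, hc, hc'⟩
    obtain ⟨e, he, he'⟩ := hu i hi
    refine ⟨e * c, ?_, ?_⟩
    · rw [H_s_x h hl, hT, he, map_smul, LinearMap.smul_apply, hc, smul_smul]
    · rw [H_s_x h hl, hT', he', map_smul, LinearMap.smul_apply, hc', smul_smul]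

lemma bar_repr (h : HD n H) {barK : K →+* K} (bar : A →+* A)
    (hbarH : ∀ w : Equiv.Perm (Fin n),
      bar (H w) * H w⁻¹ = 1 ∧ H w⁻¹ * bar (H w) = 1)
    (T : M →ₗ[K] A →ₗ[K] M) (hT1 : ∀ m, T m 1 = m)
    (hT : ∀ m a b, T m (a * b) = T (T m a) b)
    {J : Finset (Fin (n - 1))} {N : Equiv.Perm (Fin n) → M}
    (hN : ∀ w, N w = T (N 1) (H w))
    (hu : ∀ i ∈ J, ∃ c : K, T (N 1) (H (s n i)) = c • N 1)
    (b : Module.Basis {w : Equiv.Perm (Fin n) // IsShort n J w} K M)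
    (hb : ∀ w, b w = N w) (B : M →ₛₗ[barK] M) (hB : ∀ m a, B (T m a) = T (B m) (bar a))
    (hB1 : B (N 1) = N 1) (u w : {w : Equiv.Perm (Fin n) // IsShort n J w})
    (hl : len n w.1 ≤ len n u.1) : b.repr (B (b w)) u = b.repr (b w) u := by
  have h1 : B (b w) - b w = T (N 1) (bar (H w) - H w) := by
    rw [hb, hN w, hB, hB1, map_sub]
  have h2 := bar_tri h bar hbarH w
  have h3 : Submodule.span K (H '' {y | len n y < len n w.1}) ≤
      LinearMap.ker (b.coord u ∘ₗ T (N 1)) := by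
    rw [Submodule.span_le]
    rintro _ ⟨y, hy, rfl⟩
    simp only [Set.mem_ofPred_eq] at hy
    simp only [SetLike.mem_coe, LinearMap.mem_ker, LinearMap.comp_apply]
    obtain ⟨z, hz, d, hd, rfl⟩ := short_decomp J y
    have hl' := short_add hd hz
    obtain ⟨c, hc, _⟩ := char_common h T hT1 hT T hT1 hT
      (u := N 1) (u' := N 1) (fun i hi => by
        obtain ⟨c, hc⟩ := hu i hi
        exact ⟨c, hc, hc⟩) hz
    rw [H_mul h hl', hT, hc, map_smul, LinearMap.smul_apply, ← hN, ← hb ⟨d, hd⟩, map_smul,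
      Module.Basis.coord_apply, Module.Basis.repr_self, Finsupp.single_eq_of_ne, smul_zero]
    intro he
    have he' : u.1 = d := congrArg Subtype.val he
    rw [he'] at hl
    omega
  have h4 : b.coord u (T (N 1) (bar (H w) - H w)) = 0 := h3 h2
  rw [← h1, map_sub, sub_eq_zero] at h4
  exact h4

lemma canon_unique {barK : K →+* K} (hq : barK q = q⁻¹)
    {J : Finset (Fin (n - 1))}
    (b : Module.Basis {w : Equiv.Perm (Fin n) // IsShort n J w} K M)
    (B : M →ₛₗ[barK] M)
    (hB : ∀ (u w : {w : Equiv.Perm (Fin n) // IsShort n J w}), len n w.1 ≤ len n u.1 →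
      b.repr (B (b w)) u = b.repr (b w) u)
    (d : M) (hd : B d = d) (hz : ∀ u, InZ (b.repr d u)) : d = 0 := by
  by_contra hne
  have h1 : ({u | b.repr d u ≠ 0} : Set {w : Equiv.Perm (Fin n) // IsShort n J w}).Nonempty := by
    by_contra hem
    apply hne
    apply b.repr.injective
    ext u
    rw [map_zero]
    by_contra hu
    exact hem ⟨u, hu⟩
  obtain ⟨u, hu, hm⟩ := Set.exists_max_image _ (fun u => len n u.1) (Set.toFinite _) h1
  have h2 : b.repr (B d) u = barK (b.repr d u) := by
    conv_lhs => rw [← b.sum_repr d]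
    rw [map_sum, map_sum, Finset.sum_apply']
    rw [Finset.sum_eq_single u]
    · rw [map_smulₛₗ, map_smul, Finsupp.smul_apply, hB u u le_rfl, Module.Basis.repr_self,
        Finsupp.single_eq_same, smul_eq_mul, mul_one]
    · intro w _ hw
      rw [map_smulₛₗ, map_smul, Finsupp.smul_apply]
      by_cases hl : len n w.1 ≤ len n u.1
      · rw [hB u w hl, Module.Basis.repr_self, Finsupp.single_eq_of_ne hw.symm, smul_zero]
      · have : b.repr d w = 0 := by
          by_contra hw0
          exact hl (hm w hw0)
        rw [this, map_zero, zero_smul]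
    · simp
  rw [hd] at h2
  obtain ⟨G, hG⟩ := hz u
  rw [hG] at h2
  have h3 := bar_poly hq h2.symm
  apply hu
  rw [hG, h3]
  simp

end Mod

section Main

theorem main (n : ℕ) {A : Type} [Ring A] [Algebra K A]
    {H : Equiv.Perm (Fin n) → A} (hD : HD n H)
    (hHspan : Submodule.span K (Set.range H) = ⊤)
    (barK : K →+* K) (hbarKq : barK q = q⁻¹)
    (bar : A →+* A)
    (hbar_smul : ∀ (c : K) (x : A), bar (c • x) = barK c • bar x)
    (hbarH : ∀ w : Equiv.Perm (Fin n),
      bar (H w) * H w⁻¹ = 1 ∧ H w⁻¹ * bar (H w) = 1)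
    (P Q Q' : Finset (Fin (n - 1)))
    (hPQ : ∀ i ∈ P, ∀ j ∈ Q, s n i * s n j = s n j * s n i)
    (hQ'Q : Q' ⊆ Q)
    {M : Type} [AddCommGroup M] [Module K M]
    (T : M →ₗ[K] A →ₗ[K] M) (hT1 : ∀ m, T m 1 = m)
    (hT : ∀ m a b, T m (a * b) = T (T m a) b)
    (N : Equiv.Perm (Fin n) → M)
    (hNM : ∀ w, N w = T (N 1) (H w))
    (hgenPM : ∀ i ∈ P, T (N 1) (H (s n i)) = (-q) • N 1)
    (hgenQM : ∀ i ∈ Q, T (N 1) (H (s n i)) = q⁻¹ • N 1)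
    (hNLIM : LinearIndependent K
      (fun w : {w : Equiv.Perm (Fin n) // IsShort n (P ∪ Q) w} => N w))
    (hNspanM : Submodule.span K (N '' {w | IsShort n (P ∪ Q) w}) = ⊤)
    (B : M →ₛₗ[barK] M)
    (hB : ∀ m a, B (T m a) = T (B m) (bar a))
    (hB1 : B (N 1) = N 1)
    {M' : Type} [AddCommGroup M'] [Module K M']
    (T' : M' →ₗ[K] A →ₗ[K] M') (hT1' : ∀ m, T' m 1 = m)
    (hT' : ∀ m a b, T' m (a * b) = T' (T' m a) b)
    (N' : Equiv.Perm (Fin n) → M')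
    (hNM' : ∀ w, N' w = T' (N' 1) (H w))
    (hgenPM' : ∀ i ∈ P, T' (N' 1) (H (s n i)) = (-q) • N' 1)
    (hgenQM' : ∀ i ∈ Q', T' (N' 1) (H (s n i)) = q⁻¹ • N' 1)
    (hNLIM' : LinearIndependent K
      (fun w : {w : Equiv.Perm (Fin n) // IsShort n (P ∪ Q') w} => N' w))
    (hNspanM' : Submodule.span K (N' '' {w | IsShort n (P ∪ Q') w}) = ⊤)
    (B' : M' →ₛₗ[barK] M')
    (hB' : ∀ m a, B' (T' m a) = T' (B' m) (bar a))
    (hB1' : B' (N' 1) = N' 1)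
    (w₀ : Equiv.Perm (Fin n))
    (hw₀mem : w₀ ∈ DD n Q Q')
    (hw₀long : ∀ x : Equiv.Perm (Fin n), x ∈ DD n Q Q' → len n x ≤ len n w₀) :
    ∃ φ : M →ₗ[K] M',
      (∀ w, IsShort n (P ∪ Q) w →
        φ (N w) = ∑ᶠ x ∈ DD n Q Q',
          (q ^ ((len n w₀ : ℤ) - (len n x : ℤ))) • N' (x * w)) ∧
      Function.Injective φ ∧
      (∀ (m : M) (a : A), φ (T m a) = T' (φ m) a) ∧
      (∀ m : M, φ (B m) = B' (φ m)) ∧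
      (∀ (C : Equiv.Perm (Fin n) → M) (C' : Equiv.Perm (Fin n) → M'),
        IsCanonBasis n (IsShort n (P ∪ Q)) N B C →
        IsCanonBasis n (IsShort n (P ∪ Q')) N' B' C' →
        ∀ w, IsShort n (P ∪ Q) w → φ (C w) = C' (w₀ * w)) := by
  let b : Module.Basis {w : Equiv.Perm (Fin n) // IsShort n (P ∪ Q) w} K M :=
    Module.Basis.mk hNLIM (by
      rw [← hNspanM, Set.image_eq_range]; exact le_rfl)
  have hb : ∀ w, b w = N w := fun w => Module.Basis.mk_apply _ _ w
  let b' : Module.Basis {w : Equiv.Perm (Fin n) // IsShort n (P ∪ Q') w} K M' :=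
    Module.Basis.mk hNLIM' (by
      rw [← hNspanM', Set.image_eq_range]; exact le_rfl)
  have hb' : ∀ w, b' w = N' w := fun w => Module.Basis.mk_apply _ _ w
  have hd : Disjoint P Q := by
    rw [Finset.disjoint_left]
    intro i hi hi'
    have h1 := (hgenPM i hi).symm.trans (hgenQM i hi')
    have h2 : IsShort n (P ∪ Q) 1 := by intro x _; rw [len_one]; exact Nat.zero_le _
    have h3 : N 1 ≠ 0 := hNLIM.ne_zero ⟨1, h2⟩
    have h4 := smul_left_injective K h3 h1
    have h5 : (Polynomial.aeval q (Polynomial.X ^ 2 + 1 : Polynomial ℤ) : K) =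
        Polynomial.aeval q (0 : Polynomial ℤ) := by
      simp only [map_add, map_pow, Polynomial.aeval_X, map_one, map_zero]
      have h6 : q * (-q) = q * q⁻¹ := congrArg (q * ·) h4
      rw [mul_inv_cancel₀ q_ne] at h6
      rw [← h6]; ring
    have h6 := congrArg (Polynomial.eval 1) (aeval_q_inj h5)
    simp at h6
  obtain ⟨wQ, hwQ, hwQl⟩ := longest_exists (n := n) Q
  obtain ⟨wQ', hwQ', hwQl'⟩ := longest_exists (n := n) Q'
  obtain ⟨hL, hlt⟩ := w0_facts hQ'Q hw₀mem hw₀long hwQ hwQ' hwQl hwQl'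
  set D : Finset (Equiv.Perm (Fin n)) := Finset.univ.filter (· ∈ DD n Q Q') with hDdef
  have hmemD : ∀ x, x ∈ D ↔ x ∈ DD n Q Q' := by intro x; simp [hDdef]
  set v : M' := ∑ x ∈ D, q ^ ((len n w₀ : ℤ) - (len n x : ℤ)) • N' x with hv
  have hpp := pp_ne hbarKq Q'
  have hve : v = (q ^ (len n w₀ : ℤ) * (pp n Q')⁻¹) • T' (N' 1) (ee n H Q) := by
    rw [ee_factor hD hQ'Q, hT', act_ee hD T' hT1' hT' hgenQM', map_smul, LinearMap.smul_apply,
      smul_smul, mul_assoc, inv_mul_cancel₀ hpp, mul_one, map_sum, Finset.smul_sum, hv]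
    apply Finset.sum_congr rfl
    intro x _
    rw [map_smul, ← hNM', smul_smul, ← zpow_add₀ q_ne, sub_eq_add_neg]
  have hvQ : ∀ i ∈ Q, T' v (H (s n i)) = q⁻¹ • v := by
    intro i hi
    rw [hve, map_smul, LinearMap.smul_apply, ← hT', ee_mul_s hD hi, map_smul, smul_comm]
  have hvP : ∀ i ∈ P, T' v (H (s n i)) = (-q) • v := by
    intro i hi
    have hc : ee n H Q * H (s n i) = H (s n i) * ee n H Q := by
      unfold ee
      rw [Finset.sum_mul, Finset.mul_sum]
      apply Finset.sum_congr rfl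
      intro x _
      by_cases hx : x ∈ parab n Q
      · have h1 := comm_add hPQ hd (s_mem hi) hx
        have h2 := parab_comm hPQ (s_mem hi) hx
        rw [smul_mul_assoc, mul_smul_comm, ← H_mul hD h1, h2, H_mul hD]
        rw [← h2, h1, add_comm]
      · simp [cf, hx]
    rw [hve, map_smul, LinearMap.smul_apply, ← hT', hc, hT', hgenPM' i hi, map_smul,
      LinearMap.smul_apply, smul_comm]
  have hvB : B' v = v := by
    rw [hve, map_smulₛₗ, hB', hB1', bar_ee hD hbarKq bar hbar_smul hbarH hwQ hwQl, map_smul,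
      smul_smul]
    congr 1
    rw [map_mul, map_inv₀, barK_zpow hbarKq, bar_pp hbarKq hwQ' hwQl', hL, mul_inv, ← zpow_neg]
    have : ∀ a c d e p : K, a * c * d = e → a * (c * p) * d = e * p := by
      intro a c d e p h; rw [← h]; ring
    apply this
    rw [← zpow_add₀ q_ne, ← zpow_add₀ q_ne]
    congr 1
    push_cast
    ring
  let φ : M →ₗ[K] M' := b.constr K (fun w => T' v (H w))
  have hφ : ∀ w, IsShort n (P ∪ Q) w → φ (N w) = T' v (H w) := by
    intro w hw
    rw [← hb ⟨w, hw⟩]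
    exact b.constr_basis K _ _
  have hφ1 : ∀ a, φ (T (N 1) a) = T' v a := by
    have : φ ∘ₗ T (N 1) = T' v := by
      apply LinearMap.ext_on hHspan
      rintro _ ⟨w, rfl⟩
      obtain ⟨x, hx, d, hsd, rfl⟩ := short_decomp (P ∪ Q) w
      have hl := short_add hsd hx
      obtain ⟨c, hc, hc'⟩ := char_common hD T hT1 hT T' hT1' hT' (u := N 1) (u' := v)
        (J := P ∪ Q) (fun i hi => by
          rcases Finset.mem_union.mp hi with hi | hi
          · exact ⟨_, hgenPM i hi, hvP i hi⟩
          · exact ⟨_, hgenQM i hi, hvQ i hi⟩) hx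
      rw [LinearMap.comp_apply, H_mul hD hl, hT, hT', hc, hc', map_smul, map_smul,
        LinearMap.smul_apply, LinearMap.smul_apply, map_smul, ← hNM, hφ d hsd]
    intro a
    rw [← this]; rfl
  have hgen : ∀ m : M, ∃ a, m = T (N 1) a := by
    have : LinearMap.range (T (N 1)) = ⊤ := by
      rw [eq_top_iff, ← hNspanM, Submodule.span_le]
      rintro _ ⟨w, _, rfl⟩
      exact ⟨H w, (hNM w).symm⟩
    intro m
    obtain ⟨a, ha⟩ := LinearMap.range_eq_top.mp this m
    exact ⟨a, ha.symm⟩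
  have hφsum : ∀ w, IsShort n (P ∪ Q) w →
      φ (N w) = ∑ x ∈ D, q ^ ((len n w₀ : ℤ) - (len n x : ℤ)) • N' (x * w) := by
    intro w hw
    rw [hφ w hw, hv, map_sum, LinearMap.sum_apply]
    apply Finset.sum_congr rfl
    intro x hx
    rw [map_smul, LinearMap.smul_apply, hNM' x, ← hT', ← H_mul hD, ← hNM']
    exact short_add hw (parab_mono Finset.subset_union_right ((hmemD x).mp hx).1)
  have hsh : ∀ x ∈ D, ∀ w, IsShort n (P ∪ Q) w → IsShort n (P ∪ Q') (x * w) :=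
    fun x hx w hw => xw_short hPQ hd hQ'Q ((hmemD x).mp hx) hw
  have hw0D : w₀ ∈ D := (hmemD _).mpr hw₀mem
  have hreprN : ∀ y (hy : IsShort n (P ∪ Q') y) u, b'.repr (N' y) u = if y = u.1 then 1 else 0 := by
    intro y hy u
    rw [← hb' ⟨y, hy⟩, Module.Basis.repr_self, Finsupp.single_apply]
    simp only [Subtype.ext_iff]
  refine ⟨φ, ?_, ?_, ?_, ?_, ?_⟩
  · intro w hw
    rw [hφsum w hw, finsum_mem_eq_finite_toFinset_sum _ (Set.toFinite _)]
    apply Finset.sum_congr _ (fun _ _ => rfl)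
    ext x
    simp [hmemD]
  ·
    have hcoord : ∀ u : {w : Equiv.Perm (Fin n) // IsShort n (P ∪ Q) w},
        b'.coord ⟨w₀ * u.1, hsh w₀ hw0D u.1 u.2⟩ ∘ₗ φ = b.coord u := by
      intro u
      apply b.ext
      intro w
      rw [LinearMap.comp_apply, hb, hφsum w.1 w.2, map_sum, ← hb]
      simp only [map_smul, Module.Basis.coord_apply, Module.Basis.repr_self]
      rw [Finset.sum_eq_single w₀]
      · rw [hreprN _ (hsh w₀ hw0D w.1 w.2), sub_self, zpow_zero, one_smul, Finsupp.single_apply]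
        simp only [mul_right_inj, Subtype.ext_iff]
      · intro x hx hne
        rw [hreprN _ (hsh x hx w.1 w.2), if_neg, smul_zero]
        intro he
        exact hne (short_unique w.2 u.2
          (parab_mono Finset.subset_union_right ((hmemD x).mp hx).1)
          (parab_mono Finset.subset_union_right hw₀mem.1) he).1
      · intro h; exact absurd hw0D h
    rw [injective_iff_map_eq_zero]
    intro m hm
    apply b.repr.injective
    ext u
    have := congrArg (fun f => f m) (hcoord u)
    simp only [LinearMap.comp_apply, hm, map_zero, Module.Basis.coord_apply] at this
    rw [← this]; simp
  · intro m a
    obtain ⟨c, rfl⟩ := hgen m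
    rw [← hT, hφ1, hφ1, hT']
  · intro m
    obtain ⟨c, rfl⟩ := hgen m
    rw [hB, hB1, hφ1, hφ1, hB', hvB]
  · intro C C' hC hC' w hw
    have hBφ : ∀ m : M, φ (B m) = B' (φ m) := by
      intro m
      obtain ⟨c, rfl⟩ := hgen m
      rw [hB, hB1, hφ1, hφ1, hB', hvB]
    obtain ⟨hCb, R, hR0, hR⟩ := hC w hw
    obtain ⟨hCb', R', hR0', hR'⟩ := hC' (w₀ * w) (hsh w₀ hw0D w hw)
    rw [← sub_eq_zero]
    refine canon_unique hbarKq b' B' ?_ _ ?_ ?_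
    · refine bar_repr hD bar hbarH T' hT1' hT' hNM' ?_ b' hb' B' hB' hB1'
      intro i hi
      rcases Finset.mem_union.mp hi with hi | hi
      · exact ⟨_, hgenPM' i hi⟩
      · exact ⟨_, hgenQM' i hi⟩
    · rw [map_sub, ← hBφ, hCb, hCb']
    · intro u
      have hN0 : ∀ y, IsShort n (P ∪ Q') y → InZ0 (b'.repr (N' y) u) := by
        intro y hy
        rw [hreprN y hy]
        split_ifs
        · exact ⟨1, by simp⟩
        · exact ⟨0, by simp⟩
      have e1 : φ (C w) - C' (w₀ * w) =
          (∑ x ∈ D.erase w₀, q ^ ((len n w₀ : ℤ) - (len n x : ℤ)) • N' (x * w)) +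
          (∑ w', (q * Polynomial.aeval q (R w')) • φ (N w')) -
          (∑ w', (q * Polynomial.aeval q (R' w')) • N' w') := by
        rw [hR, hR', map_add, hφsum w hw, ← Finset.add_sum_erase _ _ hw0D, sub_self, zpow_zero,
          one_smul, map_sum]
        simp only [map_smul]
        abel
      rw [e1, map_sub, map_add, map_sum, map_sum, map_sum, Finsupp.sub_apply, Finsupp.add_apply,
        Finset.sum_apply', Finset.sum_apply', Finset.sum_apply']
      simp only [map_smul, Finsupp.smul_apply, smul_eq_mul]
      refine InZ.sub (InZ.add (InZ.sum _ ?_) (InZ.sum _ ?_)) (InZ.sum _ ?_)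
      · intro x hx
        rw [Finset.mem_erase] at hx
        exact (InZ_zpow (hlt x ((hmemD x).mp hx.2) hx.1)).mul (hN0 _ (hsh x hx.2 w hw))
      · intro w' _
        by_cases hw' : IsShort n (P ∪ Q) w'
        · refine InZ.mul ⟨_, rfl⟩ ?_
          rw [hφsum w' hw', map_sum, Finset.sum_apply']
          simp only [map_smul, Finsupp.smul_apply, smul_eq_mul]
          refine InZ0.sum _ ?_
          intro x hx
          exact (InZ0_zpow (hw₀long x ((hmemD x).mp hx))).mul (hN0 _ (hsh x hx w' hw'))
        · rw [hR0 w' (fun h => hw' h.1)]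
          simpa using InZ.zero
      · intro w' _
        by_cases hw' : IsShort n (P ∪ Q') w'
        · exact InZ.mul ⟨_, rfl⟩ (hN0 _ hw')
        · rw [hR0' w' (fun h => hw' h.1)]
          simpa using InZ.zero

end Main

end HeckeAux

theorem statement3 (n : ℕ) (A : Type) [Ring A] [Algebra K A]
    (H : Equiv.Perm (Fin n) → A)
    (hHLI : LinearIndependent K H)
    (hHspan : Submodule.span K (Set.range H) = ⊤)
    (hone : H 1 = 1)
    (hmul : ∀ (w : Equiv.Perm (Fin n)) (i : Fin (n - 1)),
      len n (w * s n i) = len n w + 1 → H (w * s n i) = H w * H (s n i))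
    (hquad : ∀ i : Fin (n - 1),
      H (s n i) * H (s n i) = (q⁻¹ - q) • H (s n i) + 1)
    (barK : K →+* K) (hbarKq : barK q = q⁻¹)
    (hbarKc : ∀ z : ℂ, barK (algebraMap ℂ K z) = algebraMap ℂ K z)
    (bar : A →+* A)
    (hbar_smul : ∀ (c : K) (x : A), bar (c • x) = barK c • bar x)
    (hbarH : ∀ w : Equiv.Perm (Fin n),
      bar (H w) * H w⁻¹ = 1 ∧ H w⁻¹ * bar (H w) = 1)
    (P Q Q' : Finset (Fin (n - 1)))
    (hPQ : ∀ i ∈ P, ∀ j ∈ Q, s n i * s n j = s n j * s n i)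
    (hQ'Q : Q' ⊆ Q)
    -- the module M^p_q
    (M : Type) [AddCommGroup M] [Module K M]
    (act : M → A → M)
    (hact_addlM : ∀ (m m' : M) (a : A), act (m + m') a = act m a + act m' a)
    (hact_addrM : ∀ (m : M) (a b : A), act m (a + b) = act m a + act m b)
    (hact_smullM : ∀ (c : K) (m : M) (a : A), act (c • m) a = c • act m a)
    (hact_smulrM : ∀ (c : K) (m : M) (a : A), act m (c • a) = c • act m a)
    (hact_oneM : ∀ m : M, act m 1 = m)
    (hact_mulM : ∀ (m : M) (a b : A), act m (a * b) = act (act m a) b)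
    (N : Equiv.Perm (Fin n) → M)
    (hNM : ∀ w, N w = act (N 1) (H w))
    (hgenPM : ∀ i ∈ P, act (N 1) (H (s n i)) = (-q) • N 1)
    (hgenQM : ∀ i ∈ Q, act (N 1) (H (s n i)) = q⁻¹ • N 1)
    (hNLIM : LinearIndependent K
      (fun w : {w : Equiv.Perm (Fin n) // IsShort n (P ∪ Q) w} => N w))
    (hNspanM : Submodule.span K (N '' {w | IsShort n (P ∪ Q) w}) = ⊤)
    (barM : M → M)
    (hbar_addM : ∀ m m' : M, barM (m + m') = barM m + barM m')
    (hbar_smulM : ∀ (c : K) (m : M), barM (c • m) = barK c • barM m)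
    (hbar_actM : ∀ (m : M) (a : A), barM (act m a) = act (barM m) (bar a))
    (hbar_oneM : barM (N 1) = N 1)
    -- the module M^p_{q'}
    (M' : Type) [AddCommGroup M'] [Module K M']
    (act' : M' → A → M')
    (hact_addlM' : ∀ (m m' : M') (a : A), act' (m + m') a = act' m a + act' m' a)
    (hact_addrM' : ∀ (m : M') (a b : A), act' m (a + b) = act' m a + act' m b)
    (hact_smullM' : ∀ (c : K) (m : M') (a : A), act' (c • m) a = c • act' m a)
    (hact_smulrM' : ∀ (c : K) (m : M') (a : A), act' m (c • a) = c • act' m a)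
    (hact_oneM' : ∀ m : M', act' m 1 = m)
    (hact_mulM' : ∀ (m : M') (a b : A), act' m (a * b) = act' (act' m a) b)
    (N' : Equiv.Perm (Fin n) → M')
    (hNM' : ∀ w, N' w = act' (N' 1) (H w))
    (hgenPM' : ∀ i ∈ P, act' (N' 1) (H (s n i)) = (-q) • N' 1)
    (hgenQM' : ∀ i ∈ Q', act' (N' 1) (H (s n i)) = q⁻¹ • N' 1)
    (hNLIM' : LinearIndependent K
      (fun w : {w : Equiv.Perm (Fin n) // IsShort n (P ∪ Q') w} => N' w))
    (hNspanM' : Submodule.span K (N' '' {w | IsShort n (P ∪ Q') w}) = ⊤)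
    (barM' : M' → M')
    (hbar_addM' : ∀ m m' : M', barM' (m + m') = barM' m + barM' m')
    (hbar_smulM' : ∀ (c : K) (m : M'), barM' (c • m) = barK c • barM' m)
    (hbar_actM' : ∀ (m : M') (a : A), barM' (act' m a) = act' (barM' m) (bar a))
    (hbar_oneM' : barM' (N' 1) = N' 1)
    -- the set W^{q'} ∩ W_q of shortest coset representatives for W_{q'}\W_q,
    -- and its longest element w₀ = w^{q'}_q
    (w₀ : Equiv.Perm (Fin n))
    (hw₀mem : w₀ ∈ parab n Q ∧ ∀ y ∈ parab n Q', len n w₀ ≤ len n (y * w₀))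
    (hw₀long : ∀ x : Equiv.Perm (Fin n),
      (x ∈ parab n Q ∧ ∀ y ∈ parab n Q', len n x ≤ len n (y * x)) → len n x ≤ len n w₀) :
    ∃ φ : M →ₗ[K] M',
      (∀ w, IsShort n (P ∪ Q) w →
        φ (N w) = ∑ᶠ x ∈ {x : Equiv.Perm (Fin n) |
            x ∈ parab n Q ∧ ∀ y ∈ parab n Q', len n x ≤ len n (y * x)},
          (q ^ ((len n w₀ : ℤ) - (len n x : ℤ))) • N' (x * w)) ∧
      Function.Injective φ ∧
      (∀ (m : M) (a : A), φ (act m a) = act' (φ m) a) ∧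
      (∀ m : M, φ (barM m) = barM' (φ m)) ∧
      (∀ (C : Equiv.Perm (Fin n) → M) (C' : Equiv.Perm (Fin n) → M'),
        IsCanonBasis n (IsShort n (P ∪ Q)) N barM C →
        IsCanonBasis n (IsShort n (P ∪ Q')) N' barM' C' →
        ∀ w, IsShort n (P ∪ Q) w → φ (C w) = C' (w₀ * w)) := by
  refine HeckeAux.main n ⟨hone, hmul, hquad⟩ hHspan barK hbarKq bar hbar_smul hbarH P Q Q' hPQ hQ'Q
    (LinearMap.mk₂ K act hact_addlM hact_smullM hact_addrM hact_smulrM) hact_oneM hact_mulM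
    N hNM hgenPM hgenQM hNLIM hNspanM
    { toFun := barM, map_add' := hbar_addM, map_smul' := hbar_smulM } hbar_actM hbar_oneM
    (LinearMap.mk₂ K act' hact_addlM' hact_smullM' hact_addrM' hact_smulrM') hact_oneM' hact_mulM'
    N' hNM' hgenPM' hgenQM' hNLIM' hNspanM'
    { toFun := barM', map_add' := hbar_addM', map_smul' := hbar_smulM' } hbar_actM' hbar_oneM'
    w₀ hw₀mem hw₀long
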